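/- Let G = (V,E) be a finite connected simple graph and suppose X ⊆ V is a set of at most k ≥ 1 vertices such that xc(NESUBP(G−X)) ≤ C·|E| for some constant C. Then xc(STP(G)) ≤ xc(NESUBP(G−X)) + c·k·|E| for a universal constant c, and in particular xc(STP(G)) = O((C + k)·|E|). -/

import Mathlib

/-- `P ⊆ ℝ^ι` admits an extended formulation with `m` inequalities: a linear system
`A x + B y ≤ b`, `C x + D y = c` (with `k` extra variables `y` and `p` equalities)
whose projection to the `x`-variables is exactly `P`. -/
def IsExtFormulation {ι : Type} [Fintype ι] (P : Set (ι → ℝ)) (m : ℕ) : Prop :=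
  ∃ (k p : ℕ) (A : Matrix (Fin m) ι ℝ) (B : Matrix (Fin m) (Fin k) ℝ) (b : Fin m → ℝ)
    (C : Matrix (Fin p) ι ℝ) (D : Matrix (Fin p) (Fin k) ℝ) (c : Fin p → ℝ),
    P = {x : ι → ℝ | ∃ y : Fin k → ℝ,
      (∀ i, A.mulVec x i + B.mulVec y i ≤ b i) ∧
      (∀ j, C.mulVec x j + D.mulVec y j = c j)}

/-- The extension complexity of `P`: the minimum number of inequalities
in an extended formulation of `P`. -/
noncomputable def xc {ι : Type} [Fintype ι] (P : Set (ι → ℝ)) : ℕ :=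
  sInf {m | IsExtFormulation P m}

/-- `T` is the edge set of a spanning tree of `G`: `T` consists of edges of `G` and
the graph on `V` with edge set `T` is a tree (connected and acyclic). -/
def IsSpanningTreeEdgeSet {V : Type} (G : SimpleGraph V) (T : Set (Sym2 V)) : Prop :=
  T ⊆ G.edgeSet ∧ (SimpleGraph.fromEdgeSet T).IsTree

/-- The spanning tree polytope of `G`: the convex hull in `ℝ^E` of the characteristic
vectors of edge sets of spanning trees of `G`. -/
noncomputable def stp {V : Type} (G : SimpleGraph V) : Set (↥G.edgeSet → ℝ) :=
  convexHull ℝ {x | ∃ T : Set (Sym2 V), IsSpanningTreeEdgeSet G T ∧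
    x = fun e : ↥G.edgeSet => T.indicator 1 (e : Sym2 V)}

/-- The point `(χ^S, χ^F) ∈ ℝ^V × ℝ^E` (identified with `ℝ^(V ⊕ E)`). -/
noncomputable def charVec {V : Type} (G : SimpleGraph V) (S : Set V) (F : Set (Sym2 V)) :
    V ⊕ ↥G.edgeSet → ℝ :=
  Sum.elim (S.indicator 1) (fun e => F.indicator 1 (e : Sym2 V))

/-- The subgraph polytope of `G`:
`conv{(χ^S, χ^F) | S ⊆ V, F ⊆ E(S)}`, where `E(S)` is the set of edges of `G`
with both endpoints in `S`. -/
noncomputable def subp {V : Type} (G : SimpleGraph V) : Set (V ⊕ ↥G.edgeSet → ℝ) :=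
  convexHull ℝ {z | ∃ (S : Set V) (F : Set (Sym2 V)),
    F ⊆ G.edgeSet ∧ (∀ e ∈ F, ∀ w ∈ e, w ∈ S) ∧ z = charVec G S F}

/-- The non-empty subgraph polytope of `G`:
`conv{(χ^S, χ^F) | ∅ ⊊ S ⊆ V, F ⊆ E(S)}`. -/
noncomputable def nesubp {V : Type} (G : SimpleGraph V) : Set (V ⊕ ↥G.edgeSet → ℝ) :=
  convexHull ℝ {z | ∃ (S : Set V) (F : Set (Sym2 V)), S.Nonempty ∧
    F ⊆ G.edgeSet ∧ (∀ e ∈ F, ∀ w ∈ e, w ∈ S) ∧ z = charVec G S F}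

/-- The non-empty subgraph polytope of `G − X`, canonically embedded in
`ℝ^V × ℝ^E` by setting all coordinates indexed by vertices of `X` and by edges
incident to `X` equal to `0`: it is the convex hull of the points `(χ^S, χ^F)`
with `∅ ⊊ S ⊆ V ∖ X` and `F ⊆ E(S)` (edges of `G` with both endpoints in `S`,
which are exactly the edges of `G − X` with both endpoints in `S`). -/
noncomputable def nesubpDel {V : Type} (G : SimpleGraph V) (X : Set V) :
    Set (V ⊕ ↥G.edgeSet → ℝ) :=
  convexHull ℝ {z | ∃ (S : Set V) (F : Set (Sym2 V)), S.Nonempty ∧ Disjoint S X ∧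
    F ⊆ G.edgeSet ∧ (∀ e ∈ F, ∀ w ∈ e, w ∈ S) ∧ z = charVec G S F}

/-!
By Edmonds' theorem, `STP(G)` consists of the `x ≥ 0` with `x(E) = |V| - 1` and
`x(E(S)) ≤ |S| - 1` for all nonempty `S ⊆ V`. This holds because a linear functional is a
nonnegative combination of indicators of its superlevel sets, up to a constant, and a spanning tree
of maximum weight restricts to a spanning forest of each superlevel graph.

The inequalities with `v ∈ S` for a fixed vertex `v` hold as soon as `x` can be split between the
two orientations of each edge such that every vertex other than `v` receives `1` and `v` receives
`0`, which takes `2|E|` inequalities and is possible for every spanning tree. The inequalities with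
`S ∩ X = ∅` say that the functional `(-1, x)` is at most `-1` on `NESUBP(G - X)`, which by linear
programming duality costs one inequality more than `NESUBP(G - X)` itself. One splitting for each
vertex of `X` covers all other `S`.
-/

/-- A system of inequalities `f i w ≤ b i`, indexed by `I`, together with one vector-valued equation
`g w = c`. -/
structure LinearSystem (W I Z : Type*) [AddCommGroup W] [Module ℝ W] [AddCommGroup Z]
    [Module ℝ Z] where
  f : I → Module.Dual ℝ W
  b : I → ℝ
  g : W →ₗ[ℝ] Z
  c : Z

/-- The polyhedron cut out by a linear system. -/
def LinearSystem.solutions {W I Z : Type*} [AddCommGroup W] [Module ℝ W] [AddCommGroup Z]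
    [Module ℝ Z] (s : LinearSystem W I Z) : Set W :=
  {w | (∀ i, s.f i w ≤ s.b i) ∧ s.g w = s.c}

section Farkas

variable {W I Z : Type*} [AddCommGroup W] [Module ℝ W] [AddCommGroup Z] [Module ℝ Z]

theorem apply_nonpos_of_mem_hull {t : Set (Module.Dual ℝ W)} {a : Module.Dual ℝ W}
    (ha : a ∈ PointedCone.hull ℝ t) {w : W} (hw : ∀ φ ∈ t, φ w ≤ 0) : a w ≤ 0 := by
  induction ha using Submodule.span_induction with
  | mem φ hφ => exact hw φ hφ
  | zero => exact le_rfl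
  | add φ ψ _ _ hφ hψ => exact add_nonpos hφ hψ
  | smul r φ _ hφ => exact smul_nonpos_of_nonneg_of_nonpos r.2 hφ

/-- **Farkas' lemma** -/
theorem mem_hull_image_of_forall_nonpos (s : Finset I) (F : I → Module.Dual ℝ W)
    (a : Module.Dual ℝ W) (h : ∀ w, (∀ i ∈ s, F i w ≤ 0) → a w ≤ 0) :
    a ∈ PointedCone.hull ℝ (F '' s) := by
  classical
  induction s using Finset.induction_on generalizing F a with
  | empty =>
    have ha : a = 0 := LinearMap.ext fun w =>
      le_antisymm (h w (by simp)) (by simpa using h (-w) (by simp))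
    exact ha ▸ zero_mem _
  | insert j s _ ih =>
    rw [Finset.coe_insert, Set.image_insert_eq]
    by_cases hs : ∀ w, (∀ i ∈ s, F i w ≤ 0) → a w ≤ 0
    · exact Submodule.span_mono (Set.subset_insert _ _) (ih F a hs)
    push Not at hs
    obtain ⟨w, hw, haw⟩ := hs
    have hjw : 0 < F j w := by
      by_contra! hc
      exact (h w (Finset.forall_mem_insert _ _ _ |>.2 ⟨hc, hw⟩)).not_gt haw
    -- Project along `F j` onto the functionals that vanish at the violating vector `w`.
    let P : Module.Dual ℝ W →ₗ[ℝ] Module.Dual ℝ W :=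
      LinearMap.id - (Module.Dual.eval ℝ W ((F j w)⁻¹ • w)).smulRight (F j)
    have hP (φ : Module.Dual ℝ W) (v : W) : P φ v = φ (v - (F j v / F j w) • w) := by
      simp only [P, LinearMap.sub_apply, LinearMap.id_apply, LinearMap.coe_smulRight, map_smul,
        LinearMap.smul_apply, Module.Dual.eval_apply, smul_eq_mul, map_sub]
      ring
    have hPa : P a ∈ PointedCone.hull ℝ ((P ∘ F) '' s) := by
      refine ih _ _ fun v hv => ?_
      rw [hP]
      refine h _ (Finset.forall_mem_insert _ _ _ |>.2 ⟨?_, fun i hi => hP (F i) v ▸ hv i hi⟩)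
      simp [hjw.ne']
    obtain ⟨z, hz, hza⟩ : P a ∈ (PointedCone.hull ℝ (F '' s)).map P := by
      rwa [PointedCone.map, Submodule.map_span, LinearMap.coe_restrictScalars, ← Set.image_comp]
    have hzw : z w ≤ 0 := apply_nonpos_of_mem_hull hz (Set.forall_mem_image.2 hw)
    refine Submodule.mem_span_insert.2 ⟨⟨(a w - z w) / F j w, ?_⟩, z, hz, ?_⟩
    · exact div_nonneg (by linarith) hjw.le
    · ext v
      have := LinearMap.congr_fun hza v
      simp only [LinearMap.coe_restrictScalars, hP, map_sub, map_smul, smul_eq_mul] at this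
      change a v = (a w - z w) / F j w * F j v + z v
      linear_combination -this

theorem exists_eq_sum_smul_add_comp [Fintype I] (F : I → Module.Dual ℝ W) (g : W →ₗ[ℝ] Z)
    (a : Module.Dual ℝ W) (h : ∀ w, (∀ i, F i w ≤ 0) → g w = 0 → a w ≤ 0) :
    ∃ (l : I → ℝ) (μ : Module.Dual ℝ Z), 0 ≤ l ∧ a = ∑ i, l i • F i + μ ∘ₗ g := by
  let res : Module.Dual ℝ W →ₗ[ℝ] Module.Dual ℝ (LinearMap.ker g) := (LinearMap.ker g).dualRestrict
  have hres : res a ∈ PointedCone.hull ℝ ((fun i => res (F i)) '' (Finset.univ : Finset I)) :=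
    mem_hull_image_of_forall_nonpos _ _ _ fun w hw => h w (by simpa [res] using hw) w.2
  rw [Finset.coe_univ, Set.image_univ] at hres
  obtain ⟨l, hl⟩ := (Submodule.mem_span_range_iff_exists_fun NNReal).1 hres
  have hker : a - ∑ i, (l i : ℝ) • F i ∈ LinearMap.range g.dualMap := by
    rw [LinearMap.range_dualMap_eq_dualAnnihilator_ker,
      ← Submodule.dualRestrict_ker_eq_dualAnnihilator, LinearMap.mem_ker, map_sub, map_sum,
      sub_eq_zero]
    exact hl.symm
  obtain ⟨μ, hμ⟩ := hker
  exact ⟨fun i => l i, μ, fun i => (l i).2, eq_add_of_sub_eq' hμ.symm⟩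

namespace LinearSystem

variable (s : LinearSystem W I Z) {a : Module.Dual ℝ W} {β : ℝ}

theorem apply_nonpos_of_recession {w₀ w : W} (hw₀ : w₀ ∈ s.solutions)
    (ha : ∀ w ∈ s.solutions, a w ≤ β) (hf : ∀ i, s.f i w ≤ 0) (hg : s.g w = 0) : a w ≤ 0 := by
  by_contra! hpos
  obtain ⟨n, hn⟩ := exists_nat_gt ((β - a w₀) / a w)
  have hray : w₀ + (n : ℝ) • w ∈ s.solutions := by
    refine ⟨fun i => ?_, by simp [hg, hw₀.2]⟩
    rw [map_add, map_smul]
    exact add_le_of_le_of_nonpos (hw₀.1 i)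
      (smul_nonpos_of_nonneg_of_nonpos n.cast_nonneg (hf i))
  have hbound := ha _ hray
  rw [div_lt_iff₀ hpos] at hn
  simp only [map_add, map_smul, smul_eq_mul] at hbound
  linarith

/-- The homogenization `f i w ≤ t * b i`, `0 ≤ t`, `g w = t • c`, with right-hand sides `0`. -/
def homogenization : LinearSystem (W × ℝ) (Option I) Z where
  f i := i.elim (-LinearMap.snd ℝ W ℝ) fun i =>
    s.f i ∘ₗ LinearMap.fst ℝ W ℝ - s.b i • LinearMap.snd ℝ W ℝ
  b := 0
  g := s.g ∘ₗ LinearMap.fst ℝ W ℝ - (LinearMap.snd ℝ W ℝ).smulRight s.c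
  c := 0

theorem mk_mem_solutions_homogenization {w : W} {t : ℝ} :
    (w, t) ∈ s.homogenization.solutions ↔
      0 ≤ t ∧ (∀ i, s.f i w ≤ s.b i * t) ∧ s.g w = t • s.c := by
  simp [solutions, homogenization, Option.forall, sub_eq_zero, and_assoc]

theorem le_mul_of_mem_solutions_homogenization (hs : s.solutions.Nonempty)
    (ha : ∀ w ∈ s.solutions, a w ≤ β) {w : W} {t : ℝ}
    (hw : (w, t) ∈ s.homogenization.solutions) : a w ≤ β * t := by
  obtain ⟨ht, hf, hg⟩ := s.mk_mem_solutions_homogenization.1 hw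
  obtain ⟨w₀, hw₀⟩ := hs
  rcases ht.eq_or_lt with rfl | ht
  · simp only [mul_zero, zero_smul] at hf hg ⊢
    exact s.apply_nonpos_of_recession hw₀ ha hf hg
  · have hscale : t⁻¹ • w ∈ s.solutions := by
      refine ⟨fun i => ?_, by rw [map_smul, hg, inv_smul_smul₀ ht.ne']⟩
      rw [map_smul, smul_eq_mul, inv_mul_le_iff₀ ht, mul_comm]
      exact hf i
    have hbound := ha _ hscale
    rwa [map_smul, smul_eq_mul, inv_mul_le_iff₀ ht, mul_comm] at hbound

theorem forall_le_iff_exists_multipliers [Fintype I] (hs : s.solutions.Nonempty) :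
    (∀ w ∈ s.solutions, a w ≤ β) ↔
      ∃ (l : I → ℝ) (μ : Module.Dual ℝ Z),
        0 ≤ l ∧ a = ∑ i, l i • s.f i + μ ∘ₗ s.g ∧ ∑ i, l i * s.b i + μ s.c ≤ β := by
  constructor
  · intro ha
    obtain ⟨l, μ, hl, h⟩ := exists_eq_sum_smul_add_comp s.homogenization.f s.homogenization.g
      (a ∘ₗ LinearMap.fst ℝ W ℝ - β • LinearMap.snd ℝ W ℝ) fun ⟨w, t⟩ hf hg => by
        simpa using s.le_mul_of_mem_solutions_homogenization hs ha ⟨hf, hg⟩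
    refine ⟨fun i => l (some i), μ, fun i => hl _, LinearMap.ext fun w => ?_, ?_⟩
    · simpa [homogenization, Fintype.sum_option] using LinearMap.congr_fun h (w, 0)
    · have hβ : -β = -l none - ∑ i, l (some i) * s.b i - μ s.c := by
        simpa [homogenization, Fintype.sum_option, ← sub_eq_add_neg] using
          LinearMap.congr_fun h (0, 1)
      have hnone : 0 ≤ l none := hl none
      linarith
  · rintro ⟨l, μ, hl, rfl, hβ⟩ w ⟨hf, hg⟩
    calc (∑ i, l i • s.f i + μ ∘ₗ s.g) w = ∑ i, l i * s.f i w + μ s.c := by simp [hg]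
      _ ≤ ∑ i, l i * s.b i + μ s.c := by gcongr with i; exacts [hl i, hf i]
      _ ≤ β := hβ

end LinearSystem

end Farkas

section Extension

/-- `P` is a linear image of a polyhedron that is cut out by `m` inequalities in some
finite-dimensional space: the coordinate-free counterpart of `IsExtFormulation`. -/
def HasExtension {E : Type*} [AddCommGroup E] [Module ℝ E] (P : Set E) (m : ℕ) : Prop :=
  ∃ (W I Z : Type) (_ : AddCommGroup W) (_ : Module ℝ W) (_ : AddCommGroup Z) (_ : Module ℝ Z)
    (_ : FiniteDimensional ℝ W) (_ : FiniteDimensional ℝ Z) (_ : Fintype I)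
    (s : LinearSystem W I Z) (π : W →ₗ[ℝ] E), Fintype.card I = m ∧ P = π '' s.solutions

variable {E F : Type} [AddCommGroup E] [Module ℝ E] [AddCommGroup F] [Module ℝ F]
  {P Q : Set E} {m n : ℕ}

theorem LinearSystem.hasExtension_image {W I Z : Type} [AddCommGroup W] [Module ℝ W]
    [AddCommGroup Z] [Module ℝ Z] [FiniteDimensional ℝ W] [FiniteDimensional ℝ Z] [Fintype I]
    (s : LinearSystem W I Z) (π : W →ₗ[ℝ] E) :
    HasExtension (π '' s.solutions) (Fintype.card I) :=
  ⟨W, I, Z, _, _, _, _, ‹_›, ‹_›, ‹_›, s, π, rfl, rfl⟩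

theorem IsExtFormulation.hasExtension {ι : Type} [Fintype ι] {P : Set (ι → ℝ)}
    (h : IsExtFormulation P m) : HasExtension P m := by
  obtain ⟨k, p, A, B, b, C, D, c, rfl⟩ := h
  let s : LinearSystem ((ι → ℝ) × (Fin k → ℝ)) (Fin m) (Fin p → ℝ) :=
    { f := fun i => LinearMap.proj i ∘ₗ A.mulVecLin.coprod B.mulVecLin
      b := b
      g := C.mulVecLin.coprod D.mulVecLin
      c := c }
  convert s.hasExtension_image (LinearMap.fst ℝ (ι → ℝ) (Fin k → ℝ))
  · ext x
    simp only [Set.mem_image, Prod.exists, LinearMap.fst_apply, exists_and_right, exists_eq_right]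
    simp [s, LinearSystem.solutions, funext_iff]
  · rw [Fintype.card_fin]

theorem HasExtension.isExtFormulation {ι : Type} [Fintype ι] {P : Set (ι → ℝ)}
    (h : HasExtension P m) : IsExtFormulation P m := by
  classical
  obtain ⟨W, I, Z, _, _, _, _, _, _, _, s, π, rfl, rfl⟩ := h
  let eI := (Fintype.equivFin I).symm
  let eW := (Module.finBasis ℝ W).equivFun.symm
  let eZ := (Module.finBasis ℝ (Z × (ι → ℝ))).equivFun
  refine ⟨_, _, 0, LinearMap.toMatrix' (LinearMap.pi fun i => s.f (eI i) ∘ₗ eW.toLinearMap),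
    s.b ∘ eI, LinearMap.toMatrix' (-eZ.toLinearMap ∘ₗ LinearMap.inr ℝ Z (ι → ℝ)),
    LinearMap.toMatrix' (eZ.toLinearMap ∘ₗ s.g.prod π ∘ₗ eW.toLinearMap), eZ (s.c, 0), ?_⟩
  ext x
  simp only [Set.mem_ofPred_eq, LinearMap.toMatrix'_mulVec, Matrix.zero_mulVec, Pi.zero_apply,
    zero_add]
  rw [Set.mem_image, ← eW.toEquiv.exists_congr_right]
  refine exists_congr fun y => ?_
  rw [LinearSystem.solutions, Set.mem_ofPred_eq, and_assoc, ← eI.forall_congr_right]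
  refine and_congr Iff.rfl ?_
  have heq (w : W) : s.g w = s.c ∧ π w = x ↔ eZ ((s.g w, π w) - (0, x)) = eZ (s.c, 0) := by
    simp [sub_eq_zero]
  refine (heq (eW y)).trans ?_
  rw [map_sub, sub_eq_neg_add, funext_iff]
  rfl

theorem HasExtension.xc_le {ι : Type} [Fintype ι] {P : Set (ι → ℝ)} (h : HasExtension P m) :
    xc P ≤ m :=
  Nat.sInf_le h.isExtFormulation

theorem HasExtension.hasExtension_xc {ι : Type} [Fintype ι] {P : Set (ι → ℝ)}
    (h : HasExtension P m) : HasExtension P (xc P) :=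
  IsExtFormulation.hasExtension (Nat.sInf_mem (s := {m | IsExtFormulation P m})
    ⟨m, h.isExtFormulation⟩)

theorem LinearSystem.convex_solutions {W I Z : Type*} [AddCommGroup W] [Module ℝ W]
    [AddCommGroup Z] [Module ℝ Z] (s : LinearSystem W I Z) : Convex ℝ s.solutions := by
  have hsol : s.solutions = (⋂ i, {w | s.f i w ≤ s.b i}) ∩ s.g ⁻¹' {s.c} := by
    ext w
    simp [solutions]
  rw [hsol]
  exact (convex_iInter fun i => convex_halfSpace_le (s.f i).isLinear _).inter
    ((convex_singleton _).linear_preimage s.g)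

namespace HasExtension

theorem image (h : HasExtension P m) (φ : E →ₗ[ℝ] F) : HasExtension (φ '' P) m := by
  obtain ⟨W, I, Z, _, _, _, _, _, _, _, s, π, rfl, rfl⟩ := h
  rw [Set.image_image]
  exact s.hasExtension_image (φ ∘ₗ π)

theorem inter [FiniteDimensional ℝ E] (hP : HasExtension P m) (hQ : HasExtension Q n) :
    HasExtension (P ∩ Q) (m + n) := by
  obtain ⟨W, I, Z, _, _, _, _, _, _, _, s, π, rfl, rfl⟩ := hP
  obtain ⟨W', I', Z', _, _, _, _, _, _, _, s', π', rfl, rfl⟩ := hQ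
  let p := LinearMap.fst ℝ W W'
  let p' := LinearMap.snd ℝ W W'
  let r : LinearSystem (W × W') (I ⊕ I') ((Z × Z') × E) :=
    { f := Sum.elim (fun i => s.f i ∘ₗ p) (fun i => s'.f i ∘ₗ p')
      b := Sum.elim s.b s'.b
      g := ((s.g ∘ₗ p).prod (s'.g ∘ₗ p')).prod (π ∘ₗ p - π' ∘ₗ p')
      c := ((s.c, s'.c), 0) }
  have hr (w : W × W') :
      w ∈ r.solutions ↔ w.1 ∈ s.solutions ∧ w.2 ∈ s'.solutions ∧ π w.1 = π' w.2 := by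
    simp only [r, p, p', LinearSystem.solutions, Set.mem_ofPred_eq, Sum.forall, Sum.elim_inl,
      Sum.elim_inr, LinearMap.comp_apply, LinearMap.fst_apply, LinearMap.snd_apply,
      LinearMap.prod_apply, Function.prod_apply, LinearMap.sub_apply, Prod.mk.injEq, sub_eq_zero]
    tauto
  convert r.hasExtension_image (π ∘ₗ p) using 1
  · ext x
    constructor
    · rintro ⟨⟨w, hw, rfl⟩, w', hw', h⟩
      exact ⟨(w, w'), (hr _).2 ⟨hw, hw', h.symm⟩, rfl⟩
    · rintro ⟨w, hw, rfl⟩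
      obtain ⟨h, h', heq⟩ := (hr w).1 hw
      exact ⟨⟨w.1, h, rfl⟩, w.2, h', heq.symm⟩
  · simp

theorem convex (h : HasExtension P m) : Convex ℝ P := by
  obtain ⟨W, I, Z, _, _, _, _, _, _, _, s, π, rfl, rfl⟩ := h
  exact s.convex_solutions.linear_image π

end HasExtension

section Basic

variable [FiniteDimensional ℝ E]

theorem hasExtension_linear_eq {Z : Type} [AddCommGroup Z] [Module ℝ Z] [FiniteDimensional ℝ Z]
    (g : E →ₗ[ℝ] Z) (c : Z) (m : ℕ) : HasExtension {x | g x = c} m := by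
  let s : LinearSystem E (Fin m) Z := { f := 0, b := 0, g := g, c := c }
  have hs : s.solutions = {x | g x = c} := by simp [s, LinearSystem.solutions]
  simpa [hs] using s.hasExtension_image LinearMap.id

variable (E) in
theorem hasExtension_univ (m : ℕ) : HasExtension (Set.univ : Set E) m := by
  simpa using hasExtension_linear_eq (0 : E →ₗ[ℝ] ℝ) 0 m

theorem hasExtension_of_subsingleton [Subsingleton E] (P : Set E) (m : ℕ) : HasExtension P m := by
  rcases P.eq_empty_or_nonempty with rfl | hP
  · simpa using hasExtension_linear_eq (0 : E →ₗ[ℝ] ℝ) 1 m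
  · simpa [hP.eq_univ] using hasExtension_univ E m

theorem HasExtension.biInter {α : Type*} (s : Finset α) (P : α → Set E)
    (h : ∀ a ∈ s, HasExtension (P a) m) : HasExtension (⋂ a ∈ s, P a) (s.card * m) := by
  classical
  induction s using Finset.induction_on with
  | empty => simpa using hasExtension_univ E 0
  | insert a s ha ih =>
    rw [Finset.set_biInter_insert, Finset.card_insert_of_notMem ha, add_mul, one_mul, add_comm]
    exact (h a (s.mem_insert_self a)).inter (ih fun b hb => h b (Finset.mem_insert_of_mem hb))

end Basic

theorem hasExtension_nonneg_linear_eq {ι Z : Type} [Fintype ι] [AddCommGroup Z] [Module ℝ Z]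
    [FiniteDimensional ℝ Z] (g : (ι → ℝ) →ₗ[ℝ] Z) (c : Z) :
    HasExtension {x | 0 ≤ x ∧ g x = c} (Fintype.card ι) := by
  let s : LinearSystem (ι → ℝ) ι Z := { f := fun i => -LinearMap.proj i, b := 0, g := g, c := c }
  have hs : s.solutions = {x | 0 ≤ x ∧ g x = c} := by
    simp [s, LinearSystem.solutions, Pi.le_def]
  simpa [hs] using s.hasExtension_image LinearMap.id

theorem hasExtension_stdSimplex (ι : Type) [Fintype ι] :
    HasExtension (stdSimplex ℝ ι) (Fintype.card ι) := by
  convert hasExtension_nonneg_linear_eq (Fintype.linearCombination ℝ fun _ : ι => (1 : ℝ)) 1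
  simp [stdSimplex, Pi.le_def, Fintype.linearCombination_apply]

theorem exists_hasExtension_convexHull {s : Set E} (hs : s.Finite) :
    ∃ m, HasExtension (convexHull ℝ s) m := by
  rw [hs.convexHull_eq_image]
  exact ⟨_, (@hasExtension_stdSimplex s hs.fintype).image _⟩

/-- Certificates for the validity of the inequality `T x + q ≤ β` on the solutions of `s`: triples
`(x, l, μ)` of a parameter `x` and multipliers `l` and `μ` for the inequalities and the equation. -/
def LinearSystem.certificates {W I Z : Type*} [AddCommGroup W] [Module ℝ W] [AddCommGroup Z]
    [Module ℝ Z] [Fintype I] (s : LinearSystem W I Z) (T : F →ₗ[ℝ] Module.Dual ℝ W)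
    (q : Module.Dual ℝ W) (β : ℝ) :
    LinearSystem (F × (I → ℝ) × Module.Dual ℝ Z) (Option I) (Module.Dual ℝ W) :=
  let l := LinearMap.fst ℝ (I → ℝ) (Module.Dual ℝ Z) ∘ₗ LinearMap.snd ℝ F _
  let μ := LinearMap.snd ℝ (I → ℝ) (Module.Dual ℝ Z) ∘ₗ LinearMap.snd ℝ F _
  { f := fun i => i.elim (Fintype.linearCombination ℝ s.b ∘ₗ l + LinearMap.applyₗ s.c ∘ₗ μ)
      fun i => -(LinearMap.proj i ∘ₗ l)
    b := fun i => i.elim β 0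
    g := T ∘ₗ LinearMap.fst ℝ F _ - (Fintype.linearCombination ℝ s.f ∘ₗ l + s.g.dualMap ∘ₗ μ)
    c := -q }

theorem LinearSystem.mk_mem_solutions_certificates {W I Z : Type*} [AddCommGroup W] [Module ℝ W]
    [AddCommGroup Z] [Module ℝ Z] [Fintype I] (s : LinearSystem W I Z)
    (T : F →ₗ[ℝ] Module.Dual ℝ W) (q : Module.Dual ℝ W) (β : ℝ) {x : F} {l : I → ℝ}
    {μ : Module.Dual ℝ Z} :
    (x, l, μ) ∈ (s.certificates T q β).solutions ↔
      0 ≤ l ∧ T x + q = ∑ i, l i • s.f i + μ ∘ₗ s.g ∧ ∑ i, l i * s.b i + μ s.c ≤ β := by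
  have hineq : (∀ i, (s.certificates T q β).f i (x, l, μ) ≤ (s.certificates T q β).b i) ↔
      ∑ i, l i * s.b i + μ s.c ≤ β ∧ 0 ≤ l := by
    simp [certificates, Option.forall, Fintype.linearCombination_apply, Pi.le_def]
  have heq : (s.certificates T q β).g (x, l, μ) = -q ↔
      T x + q = ∑ i, l i • s.f i + μ ∘ₗ s.g := by
    rw [add_comm (T x), ← eq_neg_add_iff_add_eq, ← sub_eq_iff_eq_add]
    rfl
  exact (and_congr hineq heq).trans (by tauto)

theorem HasExtension.valid_inequalities [FiniteDimensional ℝ F] (hQ : HasExtension Q m)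
    (B : F →ₗ[ℝ] Module.Dual ℝ E) (q : Module.Dual ℝ E) (β : ℝ) :
    HasExtension {x | ∀ z ∈ Q, B x z + q z ≤ β} (m + 1) := by
  obtain ⟨W, I, Z, _, _, _, _, _, _, _, s, π, rfl, rfl⟩ := hQ
  rcases s.solutions.eq_empty_or_nonempty with hs | hs
  · simpa [hs] using hasExtension_univ F (Fintype.card I + 1)
  convert (s.certificates (π.dualMap ∘ₗ B) (π.dualMap q) β).hasExtension_image
    (LinearMap.fst ℝ _ _) using 1
  · ext x
    calc (∀ z ∈ π '' s.solutions, B x z + q z ≤ β)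
      _ ↔ ∀ w ∈ s.solutions, (π.dualMap (B x) + π.dualMap q) w ≤ β := Set.forall_mem_image
      _ ↔ ∃ l μ, (x, l, μ) ∈ (s.certificates (π.dualMap ∘ₗ B) (π.dualMap q) β).solutions := by
        simp only [s.forall_le_iff_exists_multipliers hs, s.mk_mem_solutions_certificates,
          LinearMap.comp_apply]
      _ ↔ x ∈ LinearMap.fst ℝ _ _ '' _ := by simp
  · simp

end Extension

/-- Summation over the fibers of `p`, as a linear map. -/
def fiberSum {α β : Type*} [Fintype α] [DecidableEq β] (p : α → β) : (α → ℝ) →ₗ[ℝ] (β → ℝ) :=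
  LinearMap.pi fun b => ∑ a with p a = b, LinearMap.proj a

section FiberSum

variable {α β : Type*} [Fintype α] [DecidableEq β] (p : α → β) (f : α → ℝ)

theorem fiberSum_apply (b : β) : fiberSum p f b = ∑ a with p a = b, f a := by
  simp [fiberSum]

theorem sum_fiberSum (t : Finset β) : ∑ b ∈ t, fiberSum p f b = ∑ a with p a ∈ t, f a := by
  simp only [fiberSum_apply, Finset.sum_fiberwise_eq_sum_filter]

end FiberSum

section SpanningTree

open SimpleGraph Finset

section EdgeIndicator

variable {V : Type} {G T : SimpleGraph V}

/-- The characteristic vector of the edges of `T` among the edges of `G`. -/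
noncomputable def edgeIndicator (G T : SimpleGraph V) : G.edgeSet → ℝ :=
  fun e => T.edgeSet.indicator 1 (e : Sym2 V)

theorem edgeIndicator_nonneg : 0 ≤ edgeIndicator G T :=
  fun _ => Set.indicator_nonneg (fun _ _ => zero_le_one) _

variable [Fintype G.edgeSet]

theorem sum_edgeIndicator (hTG : T ≤ G) : ∑ e, edgeIndicator G T e = Nat.card T.edgeSet := by
  classical
  have hT : T.edgeSet = Subtype.val '' {e : G.edgeSet | (e : Sym2 V) ∈ T.edgeSet} := by
    ext e
    simpa using fun he => edgeSet_subset_edgeSet.2 hTG he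
  rw [hT, Nat.card_image_of_injective Subtype.val_injective]
  simp [edgeIndicator, Set.indicator_apply, Fintype.card_subtype]

theorem sum_edgeIndicator_of_isTree [Fintype V] (hT : T.IsTree) (hTG : T ≤ G) :
    ∑ e, edgeIndicator G T e = (Fintype.card V : ℝ) - 1 := by
  rw [sum_edgeIndicator hTG, ← Nat.card_eq_fintype_card,
    ← (isTree_iff_connected_and_card.1 hT).2, Nat.cast_add_one, add_sub_cancel_right]

end EdgeIndicator

section Arborescence

variable {V : Type} {G T : SimpleGraph V}

/-- The edge underlying a dart, as an element of the subtype of edges. -/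
def dartEdge (d : G.Dart) : G.edgeSet :=
  ⟨d.edge, d.edge_mem⟩

variable [Fintype V] [DecidableEq V] [DecidableRel G.Adj]

/-- The spanning tree inequality `x(E(S)) ≤ |S| - 1`. -/
def SubtourIneq (x : G.edgeSet → ℝ) (S : Finset V) : Prop :=
  ∑ e : G.edgeSet with e.1 ∈ S.sym2, x e ≤ #S - 1

variable (G) in
/-- The edge weights that can be split between the two orientations of each edge such that `v`
receives nothing and every other vertex receives `1` in total. Orienting a spanning tree away from
`v` splits its characteristic vector in this way. -/
def arborescencePolyhedron (v : V) : Set (G.edgeSet → ℝ) :=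
  fiberSum dartEdge '' {f | 0 ≤ f ∧ fiberSum (fun d : G.Dart => d.snd) f = 1 - Pi.single v 1}

theorem hasExtension_arborescencePolyhedron (v : V) :
    HasExtension (arborescencePolyhedron G v) (2 * #G.edgeFinset) := by
  rw [← G.dart_card_eq_twice_card_edges]
  exact (hasExtension_nonneg_linear_eq _ _).image _

theorem subtourIneq_of_mem_arborescencePolyhedron {v : V} {x : G.edgeSet → ℝ}
    (hx : x ∈ arborescencePolyhedron G v) {S : Finset V} (hv : v ∈ S) : SubtourIneq x S := by
  obtain ⟨f, ⟨hf, hin⟩, rfl⟩ := hx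
  calc ∑ e : G.edgeSet with e.1 ∈ S.sym2, fiberSum dartEdge f e
      = ∑ d with d.edge ∈ S.sym2, f d := by simp [sum_fiberSum, dartEdge]
    _ ≤ ∑ d with d.snd ∈ S, f d := by
      refine Finset.sum_le_sum_of_subset_of_nonneg (Finset.monotone_filter_right _ ?_)
        fun d _ _ => hf d
      exact fun d _ hd => Finset.mem_sym2_iff.1 hd _ (Sym2.mem_mk_right _ _)
    _ = ∑ u ∈ S, fiberSum (fun d : G.Dart => d.snd) f u := (sum_fiberSum _ _ _).symm
    _ = #S - 1 := by simp [hin, Finset.sum_pi_single', hv]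

variable (G T) in
/-- The flow of value `1` along every edge of `T` that leads away from `v`. -/
noncomputable def treeFlow (v : V) : G.Dart → ℝ :=
  {d | T.Adj d.fst d.snd ∧ T.dist v d.snd = T.dist v d.fst + 1}.indicator 1

theorem fiberSum_dartEdge_treeFlow (hT : T.IsTree) (v : V) :
    fiberSum dartEdge (treeFlow G T v) = edgeIndicator G T := by
  ext ⟨e, he⟩
  induction e with | _ a b
  let d : G.Dart := ⟨(a, b), he⟩
  have hfiber : ({d' | dartEdge d' = ⟨s(a, b), he⟩} : Finset G.Dart) = {d, d.symm} := by
    simp only [dartEdge, Subtype.mk.injEq]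
    exact d.edge_fiber
  rw [fiberSum_apply, hfiber, sum_pair d.symm_ne.symm]
  by_cases hab : T.Adj a b
  · rcases hT.dist_eq_dist_add_one_of_adj v hab with h | h <;>
      simp [treeFlow, edgeIndicator, d, hab, hab.symm, h, add_assoc]
  · simp [treeFlow, edgeIndicator, d, hab, T.adj_comm b a]

theorem one_le_fiberSum_snd_treeFlow (hT : T.IsTree) (hTG : T ≤ G) {u v : V} (huv : u ≠ v) :
    1 ≤ fiberSum (fun d : G.Dart => d.snd) (treeFlow G T v) u := by
  obtain ⟨p, hp⟩ := hT.connected.exists_walk_length_eq_dist u v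
  cases p with
  | nil => exact absurd rfl huv
  | @cons _ w _ hw q =>
    have hdist : T.dist v u = T.dist v w + 1 := by
      rcases hT.dist_eq_dist_add_one_of_adj v hw with h | h
      · exact h
      · have := dist_le q
        rw [Walk.length_cons, dist_comm] at hp
        rw [dist_comm] at this
        lia
    let d : G.Dart := ⟨(w, u), hTG hw.symm⟩
    calc 1 = treeFlow G T v d := by simp [treeFlow, d, hw.symm, hdist]
      _ ≤ ∑ d : G.Dart with d.snd = u, treeFlow G T v d :=
        single_le_sum (fun d _ => Set.indicator_nonneg (fun _ _ => zero_le_one) d) (by simp [d])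
      _ = _ := (fiberSum_apply _ _ _).symm

theorem edgeIndicator_mem_arborescencePolyhedron (hT : T.IsTree) (hTG : T ≤ G) (v : V) :
    edgeIndicator G T ∈ arborescencePolyhedron G v := by
  have hnonneg : 0 ≤ treeFlow G T v := Set.indicator_nonneg fun _ _ => zero_le_one
  have hle (u : V) :
      (1 - Pi.single v 1 : V → ℝ) u ≤ fiberSum (fun d : G.Dart => d.snd) (treeFlow G T v) u := by
    rcases eq_or_ne u v with rfl | huv
    · rw [fiberSum_apply]
      simpa using sum_nonneg fun d _ => hnonneg d
    · simpa [huv] using one_le_fiberSum_snd_treeFlow hT hTG huv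
  have htotal : ∑ u, (1 - Pi.single v 1 : V → ℝ) u =
      ∑ u, fiberSum (fun d : G.Dart => d.snd) (treeFlow G T v) u := by
    calc ∑ u, (1 - Pi.single v 1 : V → ℝ) u = ∑ e, edgeIndicator G T e := by
          simp [sum_edgeIndicator_of_isTree hT hTG]
      _ = ∑ e, fiberSum dartEdge (treeFlow G T v) e := by rw [fiberSum_dartEdge_treeFlow hT]
      _ = ∑ u, fiberSum (fun d : G.Dart => d.snd) (treeFlow G T v) u := by simp [sum_fiberSum]
  refine ⟨treeFlow G T v, ⟨hnonneg, ?_⟩, fiberSum_dartEdge_treeFlow hT v⟩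
  ext u
  exact ((sum_eq_sum_iff_of_le fun u _ => hle u).1 htotal u (mem_univ u)).symm

end Arborescence

section Exchange

variable {V : Type} {G T : SimpleGraph V} {u v : V} {f : Sym2 V}

theorem isTree_deleteEdges_sup_edge [Finite V] (hT : T.IsTree) (huv : u ≠ v) (hn : ¬T.Adj u v)
    {p : T.Walk u v} (hp : p.IsPath) (hf : f ∈ p.edges) :
    ((T ⊔ edge u v).deleteEdges {f}).IsTree := by
  have hadj : (T ⊔ edge u v).Adj v u := by simp [edge_adj, huv.symm]
  have hcycle : (Walk.cons hadj (p.mapLe le_sup_left)).IsCycle := by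
    refine (Walk.cons_isCycle_iff _ _).2 ⟨hp.mapLe le_sup_left, fun h => hn ?_⟩
    rw [Walk.edges_mapLe_eq_edges] at h
    exact (p.edges_subset_edgeSet h).symm
  have hbridge : ¬(T ⊔ edge u v).IsBridge f := fun h => by
    refine h.notMem_edges_of_isCycle hcycle ?_
    rw [Walk.edges_cons, Walk.edges_mapLe_eq_edges]
    exact List.mem_cons_of_mem _ hf
  have hfT : f ∈ T.edgeSet := p.edges_subset_edgeSet hf
  refine isTree_iff_connected_and_card.2 ⟨?_, ?_⟩
  · induction f with | _ x y
    exact (hT.connected.mono le_sup_left).connected_delete_edge_of_not_isBridge hbridge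
  · rw [← (isTree_iff_connected_and_card.1 hT).2, edgeSet_deleteEdges, edgeSet_sup,
      edgeSet_edge_of_ne huv, Set.union_singleton, Nat.card_coe_set_eq, Nat.card_coe_set_eq,
      Set.ncard_sdiff_singleton_of_mem (Set.mem_insert_of_mem _ hfT),
      Set.ncard_insert_of_notMem (by simpa using hn), Nat.add_sub_cancel]

theorem edgeIndicator_deleteEdges_sup_edge [DecidableEq G.edgeSet] (huv : s(u, v) ∈ G.edgeSet)
    (hn : ¬T.Adj u v) (hf : f ∈ G.edgeSet) (hfT : f ∈ T.edgeSet) :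
    edgeIndicator G ((T ⊔ edge u v).deleteEdges {f}) =
      edgeIndicator G T + Pi.single ⟨s(u, v), huv⟩ 1 - Pi.single ⟨f, hf⟩ 1 := by
  classical
  have hne : f ≠ s(u, v) := fun h => hn (by rwa [h] at hfT)
  ext e
  have hedges : (e : Sym2 V) ∈ ((T ⊔ edge u v).deleteEdges {f}).edgeSet ↔
      ((e : Sym2 V) ∈ T.edgeSet ∨ (e : Sym2 V) = s(u, v)) ∧ (e : Sym2 V) ≠ f := by
    simp [edgeSet_edge_of_ne (G.ne_of_adj huv), ← or_and_right, or_comm]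
  simp only [edgeIndicator, Set.indicator_apply, hedges, Pi.add_apply, Pi.sub_apply,
    Pi.single_apply, Subtype.ext_iff, Pi.one_apply]
  by_cases h1 : (e : Sym2 V) = s(u, v)
  · simp [h1, hne.symm, hn]
  · by_cases h2 : (e : Sym2 V) = f <;> simp [h1, h2, hfT, hne]

end Exchange

theorem card_le_card_connectedComponent_add_card_edgeSet {V : Type*} [Finite V]
    (F : SimpleGraph V) :
    Nat.card V ≤ Nat.card F.ConnectedComponent + Nat.card F.edgeSet := by
  classical
  have := Fintype.ofFinite F.ConnectedComponent
  let i (p : Σ c : F.ConnectedComponent, c.toSimpleGraph.edgeSet) : F.edgeSet :=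
    (Embedding.induce p.1.supp).mapEdgeSet p.2
  have hcomp (p) : F.connectedComponentMk (i p).1.out.1 = p.1 := by
    obtain ⟨u, -, hu⟩ := Sym2.mem_map.1 (Sym2.out_fst_mem (i p).1)
    exact hu ▸ u.2
  have hi : Function.Injective i := by
    rintro ⟨c, e⟩ ⟨c', e'⟩ h
    obtain rfl : c = c' := (hcomp ⟨c, e⟩).symm.trans (h ▸ hcomp ⟨c', e'⟩)
    exact congrArg _ ((Embedding.induce c.supp).mapEdgeSet.injective h)
  calc Nat.card V = ∑ c : F.ConnectedComponent, Nat.card c := by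
        rw [← Nat.card_sigma]
        exact Nat.card_congr (Equiv.sigmaFiberEquiv F.connectedComponentMk).symm
    _ ≤ ∑ c : F.ConnectedComponent, (Nat.card c.toSimpleGraph.edgeSet + 1) :=
      sum_le_sum fun c _ => c.connected_toSimpleGraph.card_vert_le_card_edgeSet_add_one
    _ = Nat.card F.ConnectedComponent +
        Nat.card (Σ c : F.ConnectedComponent, c.toSimpleGraph.edgeSet) := by
      simp [sum_add_distrib, Nat.card_sigma, add_comm]
    _ ≤ _ := by gcongr; exact Nat.card_le_card_of_injective i hi

section Superlevel

/-- A spanning tree of `G` of maximum total weight. -/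
structure IsMaxSpanningTree {V : Type} (G : SimpleGraph V) [Fintype G.edgeSet]
    (w : G.edgeSet → ℝ) (T : SimpleGraph V) : Prop where
  le : T ≤ G
  isTree : T.IsTree
  dotProduct_le : ∀ T' ≤ G, T'.IsTree → w ⬝ᵥ edgeIndicator G T' ≤ w ⬝ᵥ edgeIndicator G T

/-- The spanning subgraph of the edges of `G` of weight at least `t`. -/
def superlevelGraph {V : Type} {G : SimpleGraph V} (w : G.edgeSet → ℝ) (t : ℝ) : SimpleGraph V :=
  fromEdgeSet (Subtype.val '' {e | t ≤ w e})

variable {V : Type} {G T : SimpleGraph V} {w x : G.edgeSet → ℝ} {t : ℝ}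

theorem mem_edgeSet_superlevelGraph {e : G.edgeSet} :
    (e : Sym2 V) ∈ (superlevelGraph w t).edgeSet ↔ t ≤ w e := by
  simp [superlevelGraph, G.not_isDiag_of_mem_edgeSet e.2]

theorem sum_edgeIndicator_inf_superlevelGraph [Fintype G.edgeSet] :
    ∑ e, edgeIndicator G (T ⊓ superlevelGraph w t) e =
      ∑ e with t ≤ w e, edgeIndicator G T e := by
  classical
  rw [sum_filter]
  refine sum_congr rfl fun e _ => ?_
  simp only [edgeIndicator, Set.indicator_apply, edgeSet_inf, Set.mem_inter_iff,
    mem_edgeSet_superlevelGraph, and_comm, ite_and]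

/-- Otherwise the tree path between the ends of `e` has an edge lighter than `e`, and exchanging it
for `e` increases the weight. -/
theorem IsMaxSpanningTree.reachable_inf_superlevelGraph [Finite V] [Fintype G.edgeSet]
    (hT : IsMaxSpanningTree G w T) {e : G.edgeSet} (he : t ≤ w e) {u v : V} (hu : u ∈ e.1)
    (hv : v ∈ e.1) :
    (T ⊓ superlevelGraph w t).Reachable u v := by
  classical
  rcases eq_or_ne u v with rfl | huv
  · exact .rfl
  obtain ⟨e, heG⟩ := e
  obtain rfl : e = s(u, v) := (Sym2.mem_and_mem_iff huv).1 ⟨hu, hv⟩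
  by_cases hn : T.Adj u v
  · exact Adj.reachable ((mem_edgeSet _).1 ⟨hn, mem_edgeSet_superlevelGraph.2 he⟩)
  obtain ⟨p, hp⟩ := (hT.isTree.connected.preconnected u v).exists_isPath
  refine ⟨p.transfer _ fun f hf => ?_⟩
  have hfT : f ∈ T.edgeSet := p.edges_subset_edgeSet hf
  have hfG : f ∈ G.edgeSet := edgeSet_subset_edgeSet.2 hT.le hfT
  suffices t ≤ w ⟨f, hfG⟩ by
    rw [edgeSet_inf]
    exact ⟨hfT, mem_edgeSet_superlevelGraph.2 this⟩
  have hexchange := hT.dotProduct_le _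
    ((deleteEdges_le _).trans (sup_le hT.le ((edge_le_iff _).2 (.inr heG))))
    (isTree_deleteEdges_sup_edge hT.isTree huv hn hp hf)
  rw [edgeIndicator_deleteEdges_sup_edge heG hn hfG hfT, dotProduct_sub, dotProduct_add,
    dotProduct_single_one, dotProduct_single_one] at hexchange
  linarith

variable [Fintype V]

theorem sum_le_card_sub_card_connectedComponent [DecidableEq V] [DecidableRel G.Adj] (hx : 0 ≤ x)
    (hS : ∀ S : Finset V, S.Nonempty → SubtourIneq x S) (F : SimpleGraph V) (A : Finset G.edgeSet)
    (hA : ∀ e ∈ A, ∀ u ∈ e.1, ∀ v ∈ e.1, F.Reachable u v) :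
    ∑ e ∈ A, x e ≤ (Fintype.card V : ℝ) - Nat.card F.ConnectedComponent := by
  classical
  have := Fintype.ofFinite F.ConnectedComponent
  let comp (e : G.edgeSet) : F.ConnectedComponent := F.connectedComponentMk e.1.out.1
  let supp (c : F.ConnectedComponent) : Finset V := {v | F.connectedComponentMk v = c}
  calc ∑ e ∈ A, x e = ∑ c, ∑ e ∈ A with comp e = c, x e := (sum_fiberwise _ _ _).symm
    _ ≤ ∑ c, ∑ e : G.edgeSet with e.1 ∈ (supp c).sym2, x e := by
      refine sum_le_sum fun c _ => sum_le_sum_of_subset_of_nonneg (fun e he => ?_) fun e _ _ => hx e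
      obtain ⟨heA, rfl⟩ := mem_filter.1 he
      refine mem_filter.2 ⟨mem_univ _, mem_sym2_iff.2 fun v hv => mem_filter.2 ⟨mem_univ _, ?_⟩⟩
      exact ConnectedComponent.sound (hA e heA v hv _ (Sym2.out_fst_mem _))
    _ ≤ ∑ c, ((#(supp c) : ℝ) - 1) := by
      refine sum_le_sum fun c _ => hS _ ?_
      obtain ⟨v, hv⟩ := c.exists_rep
      exact ⟨v, mem_filter.2 ⟨mem_univ _, hv⟩⟩
    _ = (Fintype.card V : ℝ) - Nat.card F.ConnectedComponent := by
      have hcard : Fintype.card V = ∑ c, #(supp c) :=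
        card_eq_sum_card_fiberwise fun _ _ => mem_univ _
      simp [hcard]

theorem IsMaxSpanningTree.sum_superlevel_le [DecidableEq V] [DecidableRel G.Adj]
    (hT : IsMaxSpanningTree G w T) (hx : 0 ≤ x)
    (hS : ∀ S : Finset V, S.Nonempty → SubtourIneq x S) (t : ℝ) :
    ∑ e with t ≤ w e, x e ≤ ∑ e with t ≤ w e, edgeIndicator G T e := by
  have hcard := card_le_card_connectedComponent_add_card_edgeSet (T ⊓ superlevelGraph w t)
  rw [Nat.card_eq_fintype_card] at hcard
  rify at hcard
  calc ∑ e with t ≤ w e, x e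
      ≤ (Fintype.card V : ℝ) - Nat.card (T ⊓ superlevelGraph w t).ConnectedComponent :=
        sum_le_card_sub_card_connectedComponent hx hS _ _ fun e he u hu v hv =>
          hT.reachable_inf_superlevelGraph (mem_filter.1 he).2 hu hv
    _ ≤ Nat.card (T ⊓ superlevelGraph w t).edgeSet := by linarith
    _ = ∑ e with t ≤ w e, edgeIndicator G T e := by
        rw [← sum_edgeIndicator_inf_superlevelGraph, sum_edgeIndicator (inf_le_left.trans hT.le)]

end Superlevel

theorem sum_sub_mul_nonpos {ι : Type*} (s : Finset ι) (w a : ι → ℝ) (m : ℝ)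
    (hw : ∀ i ∈ s, m ≤ w i) (h : ∀ t > m, ∑ i ∈ s with t ≤ w i, a i ≤ 0) :
    ∑ i ∈ s, (w i - m) * a i ≤ 0 := by
  classical
  induction s using Finset.induction_on_min_value w generalizing m with
  | empty => simp
  | insert j s hj hmin ih =>
    have hmj : m ≤ w j := hw j (mem_insert_self j s)
    have hall : (w j - m) * ∑ i ∈ insert j s, a i ≤ 0 := by
      rcases hmj.eq_or_lt with hm | hm
      · simp [hm]
      · refine mul_nonpos_of_nonneg_of_nonpos (sub_nonneg.2 hmj) ?_
        have hlevel : {i ∈ insert j s | w j ≤ w i} = insert j s :=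
          filter_true_of_mem ((forall_mem_insert _ _ _).2 ⟨le_rfl, hmin⟩)
        exact hlevel ▸ h _ hm
    have habove : ∑ i ∈ s, (w i - w j) * a i ≤ 0 := by
      refine ih _ hmin fun t ht => ?_
      have := h t (hmj.trans_lt ht)
      rwa [filter_insert, if_neg ht.not_ge] at this
    calc ∑ i ∈ insert j s, (w i - m) * a i
        = (w j - m) * ∑ i ∈ insert j s, a i + ∑ i ∈ insert j s, (w i - w j) * a i := by
          rw [mul_sum, ← sum_add_distrib]
          exact sum_congr rfl fun _ _ => by ring
      _ = (w j - m) * ∑ i ∈ insert j s, a i + ∑ i ∈ s, (w i - w j) * a i := by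
          rw [sum_insert hj (f := fun i => (w i - w j) * a i), sub_self, zero_mul, zero_add]
      _ ≤ 0 := add_nonpos hall habove

section Edmonds

variable {V : Type} {G T : SimpleGraph V}

variable (G) in
theorem stp_eq_convexHull :
    stp G = convexHull ℝ (edgeIndicator G '' {T | T ≤ G ∧ T.IsTree}) := by
  refine congrArg _ (Set.ext fun x => ⟨?_, ?_⟩)
  · rintro ⟨T, ⟨hTG, hT⟩, rfl⟩
    have hedges : (fromEdgeSet T).edgeSet = T := by
      rw [edgeSet_fromEdgeSet, sdiff_eq_left, Set.disjoint_left]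
      exact fun e he => G.not_isDiag_of_mem_edgeSet (hTG he)
    refine ⟨fromEdgeSet T, ⟨edgeSet_subset_edgeSet.1 (hedges.symm ▸ hTG), hT⟩, ?_⟩
    ext e
    rw [edgeIndicator, hedges]
  · rintro ⟨T, ⟨hTG, hT⟩, rfl⟩
    exact ⟨T.edgeSet, ⟨edgeSet_subset_edgeSet.2 hTG, by rwa [fromEdgeSet_edgeSet]⟩, rfl⟩

theorem exists_isMaxSpanningTree [Finite V] [Fintype G.edgeSet] (hG : G.Connected)
    (w : G.edgeSet → ℝ) : ∃ T, IsMaxSpanningTree G w T := by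
  obtain ⟨T, ⟨hTG, hT⟩, hmax⟩ := Set.exists_max_image {T | T ≤ G ∧ T.IsTree}
    (fun T => w ⬝ᵥ edgeIndicator G T) (Set.toFinite _) hG.exists_isTree_le
  exact ⟨T, hTG, hT, fun T' hT'G hT' => hmax T' ⟨hT'G, hT'⟩⟩

variable [Fintype V] [DecidableEq V] [DecidableRel G.Adj] {w x : G.edgeSet → ℝ}

theorem IsMaxSpanningTree.dotProduct_le_of_subtourIneq (hT : IsMaxSpanningTree G w T) (hx : 0 ≤ x)
    (htotal : ∑ e, x e = (Fintype.card V : ℝ) - 1)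
    (hS : ∀ S : Finset V, S.Nonempty → SubtourIneq x S) :
    w ⬝ᵥ x ≤ w ⬝ᵥ edgeIndicator G T := by
  obtain ⟨m, hm⟩ := (Set.finite_range w).bddBelow
  have hshift : ∑ e, (w e - m) * (x - edgeIndicator G T) e ≤ 0 := by
    refine sum_sub_mul_nonpos _ w _ m (fun e _ => hm ⟨e, rfl⟩) fun t _ => ?_
    simpa using hT.sum_superlevel_le hx hS t
  have hdot : ∑ e, (w e - m) * (x - edgeIndicator G T) e =
      w ⬝ᵥ x - w ⬝ᵥ edgeIndicator G T - m * (∑ e, x e - ∑ e, edgeIndicator G T e) := by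
    simp only [dotProduct, ← sum_sub_distrib, mul_sum, Pi.sub_apply]
    exact sum_congr rfl fun _ _ => by ring
  rw [hdot, htotal, sum_edgeIndicator_of_isTree hT.isTree hT.le] at hshift
  linarith

/-- Edmonds' description of the spanning tree polytope. -/
theorem mem_stp_of_subtourIneq (hG : G.Connected) (hx : 0 ≤ x)
    (htotal : ∑ e, x e = (Fintype.card V : ℝ) - 1)
    (hS : ∀ S : Finset V, S.Nonempty → SubtourIneq x S) : x ∈ stp G := by
  rw [stp_eq_convexHull]
  by_contra hmem
  have hfinite : (edgeIndicator G '' {T | T ≤ G ∧ T.IsTree}).Finite := (Set.toFinite _).image _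
  obtain ⟨φ, c, hφ, hφx⟩ := geometric_hahn_banach_closed_point (convex_convexHull ℝ _)
    (hfinite.isClosed_convexHull ℝ) hmem
  obtain ⟨w, hw⟩ := (dotProductEquiv ℝ G.edgeSet).surjective φ.toLinearMap
  have hdot (y : G.edgeSet → ℝ) : φ y = w ⬝ᵥ y := (LinearMap.congr_fun hw y).symm
  obtain ⟨T, hT⟩ := exists_isMaxSpanningTree hG w
  have htree := hφ _ (subset_convexHull ℝ _ ⟨T, ⟨hT.le, hT.isTree⟩, rfl⟩)
  have hle := hT.dotProduct_le_of_subtourIneq hx htotal hS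
  rw [hdot] at htree hφx
  linarith

end Edmonds

section Apex

theorem exists_hasExtension_nesubpDel {V : Type} [Finite V] (G : SimpleGraph V) (X : Set V) :
    ∃ m, HasExtension (nesubpDel G X) m :=
  exists_hasExtension_convexHull <|
    (Set.finite_range fun p : Set V × Set (Sym2 V) => charVec G p.1 p.2).subset
      fun _ ⟨S, F, _, _, _, _, hz⟩ => ⟨(S, F), hz.symm⟩

variable {V : Type} [Fintype V] {G : SimpleGraph V}

/-- The weights `x` with `x(F) ≤ |S| - 1` for all generators `(χ^S, χ^F)` of `nesubpDel G X`, as the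
set of inequalities in `x` that are valid on this polytope. -/
def nesubpDelPolar (G : SimpleGraph V) [Fintype G.edgeSet] (X : Set V) : Set (G.edgeSet → ℝ) :=
  {x | ∀ z ∈ nesubpDel G X, ∑ e, x e * z (.inr e) + -∑ v, z (.inl v) ≤ -1}

variable (G) in
theorem hasExtension_nesubpDelPolar [Fintype G.edgeSet] (X : Set V) :
    HasExtension (nesubpDelPolar G X) (xc (nesubpDel G X) + 1) := by
  obtain ⟨m, hm⟩ := exists_hasExtension_nesubpDel G X
  simpa [nesubpDelPolar, LinearMap.sum_apply] using hm.hasExtension_xc.valid_inequalities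
    (∑ e : G.edgeSet, (LinearMap.proj e : (G.edgeSet → ℝ) →ₗ[ℝ] ℝ).smulRight
      (LinearMap.proj (.inr e) : (V ⊕ G.edgeSet → ℝ) →ₗ[ℝ] ℝ))
    (-∑ v, LinearMap.proj (.inl v)) (-1)

theorem sum_charVec_inl (S : Finset V) (F : Set (Sym2 V)) :
    ∑ v, charVec G S F (.inl v) = #S := by
  classical
  simp [charVec, Set.indicator_apply]

variable [DecidableEq V] [DecidableRel G.Adj] {X : Set V} {x : G.edgeSet → ℝ}

theorem subtourIneq_of_mem_nesubpDelPolar (hx : x ∈ nesubpDelPolar G X) {S : Finset V}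
    (hS : S.Nonempty) (hSX : Disjoint (S : Set V) X) : SubtourIneq x S := by
  have hgen := hx (charVec G S {e | e ∈ G.edgeSet ∧ e ∈ S.sym2}) <| subset_convexHull ℝ _
    ⟨S, _, hS, hSX, fun e he => he.1, fun e he => mem_sym2_iff.1 he.2, rfl⟩
  have hedges : ∑ e, x e * charVec G S {e | e ∈ G.edgeSet ∧ e ∈ S.sym2} (.inr e) =
      ∑ e : G.edgeSet with e.1 ∈ S.sym2, x e := by
    simp [charVec, Set.indicator_apply, sum_filter]
  rw [hedges, sum_charVec_inl] at hgen
  rw [SubtourIneq]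
  linarith

theorem sum_mul_charVec_inr_le (hx : 0 ≤ x) {S : Finset V} {F : Set (Sym2 V)}
    (hF : ∀ e ∈ F, ∀ v ∈ e, v ∈ S) :
    ∑ e, x e * charVec G S F (.inr e) ≤ ∑ e : G.edgeSet with e.1 ∈ S.sym2, x e := by
  classical
  calc ∑ e, x e * charVec G S F (.inr e) = ∑ e : G.edgeSet with e.1 ∈ F, x e := by
        simp [charVec, Set.indicator_apply, sum_filter]
    _ ≤ ∑ e : G.edgeSet with e.1 ∈ S.sym2, x e :=
        sum_le_sum_of_subset_of_nonneg
          (monotone_filter_right _ fun e _ he => mem_sym2_iff.2 (hF e he)) fun e _ _ => hx e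

theorem mem_nesubpDelPolar (hx : 0 ≤ x) (h : ∀ S : Finset V, S.Nonempty → SubtourIneq x S) :
    x ∈ nesubpDelPolar G X := by
  let φ : (V ⊕ G.edgeSet → ℝ) →ₗ[ℝ] ℝ :=
    ∑ e, x e • LinearMap.proj (.inr e) + -∑ v, LinearMap.proj (.inl v)
  have hφ (z) : φ z = ∑ e, x e * z (.inr e) + -∑ v, z (.inl v) := by
    simp [φ, LinearMap.sum_apply]
  intro z hz
  rw [← hφ]
  refine convexHull_min ?_ (convex_halfSpace_le φ.isLinear _) hz
  rintro _ ⟨S, F, hS, -, -, hF, rfl⟩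
  classical
  lift S to Finset V using S.toFinite
  have hsubtour : ∑ e : G.edgeSet with e.1 ∈ S.sym2, x e ≤ #S - 1 := h S hS
  have hedges := sum_mul_charVec_inr_le (G := G) hx hF
  rw [Set.mem_ofPred_eq, hφ, sum_charVec_inl]
  linarith

variable (G) in
/-- The linear description of `stp G` in which the spanning tree inequalities of the vertex sets
disjoint from `X` are expressed by `nesubpDelPolar` and the others by flows rooted in `X`. -/
def spanningTreeRelaxation (X : Finset V) : Set (G.edgeSet → ℝ) :=
  ({x | 0 ≤ x ∧ ∑ e, x e = (Fintype.card V : ℝ) - 1} ∩ nesubpDelPolar G X) ∩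
    ⋂ v ∈ X, arborescencePolyhedron G v

variable (G) in
theorem hasExtension_spanningTreeRelaxation (X : Finset V) :
    HasExtension (spanningTreeRelaxation G X)
      (#G.edgeFinset + (xc (nesubpDel G (X : Set V)) + 1) + #X * (2 * #G.edgeFinset)) := by
  have hnonneg := hasExtension_nonneg_linear_eq
    (Fintype.linearCombination ℝ fun _ : G.edgeSet => (1 : ℝ)) ((Fintype.card V : ℝ) - 1)
  simp only [Fintype.linearCombination_apply, smul_eq_mul, mul_one, ← edgeFinset_card] at hnonneg
  exact (hnonneg.inter (hasExtension_nesubpDelPolar G X)).inter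
    (.biInter X _ fun v _ => hasExtension_arborescencePolyhedron v)

theorem stp_eq_spanningTreeRelaxation (hG : G.Connected) (X : Finset V) :
    stp G = spanningTreeRelaxation G X := by
  refine Set.Subset.antisymm ?_ ?_
  · rw [stp_eq_convexHull]
    refine convexHull_min ?_ (hasExtension_spanningTreeRelaxation G X).convex
    rintro _ ⟨T, ⟨hTG, hT⟩, rfl⟩
    have hflow := edgeIndicator_mem_arborescencePolyhedron hT hTG
    exact ⟨⟨⟨edgeIndicator_nonneg, sum_edgeIndicator_of_isTree hT hTG⟩,
      mem_nesubpDelPolar edgeIndicator_nonneg fun S ⟨v, hv⟩ =>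
        subtourIneq_of_mem_arborescencePolyhedron (hflow v) hv⟩,
      Set.mem_iInter₂.2 fun v _ => hflow v⟩
  · rintro x ⟨⟨⟨hx, hsum⟩, hpolar⟩, hflow⟩
    refine mem_stp_of_subtourIneq hG hx hsum fun S hS => ?_
    by_cases hSX : Disjoint S X
    · exact subtourIneq_of_mem_nesubpDelPolar hpolar hS (disjoint_coe.2 hSX)
    · obtain ⟨v, hvS, hvX⟩ := not_disjoint_iff.1 hSX
      exact subtourIneq_of_mem_arborescencePolyhedron (Set.mem_iInter₂.1 hflow v hvX) hvS

end Apex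

theorem xc_stp_le_xc_nesubpDel_add {V : Type} [Fintype V] {G : SimpleGraph V} [DecidableRel G.Adj]
    (hG : G.Connected) {X : Finset V} {k : ℕ} (hk : 1 ≤ k) (hX : #X ≤ k) :
    xc (stp G) ≤ xc (nesubpDel G (X : Set V)) + 4 * k * #G.edgeFinset := by
  classical
  rcases Nat.eq_zero_or_pos #G.edgeFinset with hE | hE
  · have : IsEmpty G.edgeSet := by rwa [← Fintype.card_eq_zero_iff, ← edgeFinset_card]
    exact (hasExtension_of_subsingleton (stp G) 0).xc_le.trans (Nat.zero_le _)
  · have hext := hasExtension_spanningTreeRelaxation G X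
    rw [← stp_eq_spanningTreeRelaxation hG] at hext
    calc xc (stp G)
      _ ≤ #G.edgeFinset + (xc (nesubpDel G (X : Set V)) + 1) + #X * (2 * #G.edgeFinset) :=
        hext.xc_le
      _ ≤ k * #G.edgeFinset + (xc (nesubpDel G (X : Set V)) + k * #G.edgeFinset) +
          k * (2 * #G.edgeFinset) := by
        gcongr
        · exact Nat.le_mul_of_pos_left _ hk
        · exact Nat.mul_pos hk hE
      _ = xc (nesubpDel G (X : Set V)) + 4 * k * #G.edgeFinset := by ring

end SpanningTree

/-- Let `G = (V, E)` be a finite connected simple graph and suppose `X ⊆ V` is a set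
of at most `k ≥ 1` vertices such that `xc(NESUBP(G−X)) ≤ C·|E|` for some constant `C`.
Then `xc(STP(G)) ≤ xc(NESUBP(G−X)) + c·k·|E|` for a universal constant `c`, and in
particular `xc(STP(G)) = O((C + k)·|E|)`. -/
theorem xc_stp_le_of_apex :
    ∃ c : ℝ, 0 < c ∧
      ∀ (V : Type) [Fintype V] [DecidableEq V] (G : SimpleGraph V) [DecidableRel G.Adj],
        G.Connected →
        ∀ (X : Finset V) (k : ℕ), 1 ≤ k → X.card ≤ k →
          ∀ C : ℝ, (xc (nesubpDel G (↑X : Set V)) : ℝ) ≤ C * (G.edgeFinset.card : ℝ) →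
            (xc (stp G) : ℝ) ≤
                (xc (nesubpDel G (↑X : Set V)) : ℝ) + c * k * (G.edgeFinset.card : ℝ) ∧
            (xc (stp G) : ℝ) ≤ c * (C + k) * (G.edgeFinset.card : ℝ) := by
  refine ⟨4, by norm_num, fun V _ _ G _ hG X k hk hX C hC => ?_⟩
  have hle : (xc (stp G) : ℝ) ≤ xc (nesubpDel G (X : Set V)) + 4 * k * G.edgeFinset.card :=
    mod_cast xc_stp_le_xc_nesubpDel_add hG hk hX
  exact ⟨hle, by linarith⟩
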